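/- Let n ≥ 1 and let S be a unital star subalgebra of Matrix (Fin n) (Fin n) ℂ. Then there exist ℓ ≥ 1, positive integers n_1,…,n_ℓ and m_1,…,m_ℓ with Σ_{i=1}^ℓ n_i·m_i = n, a bijection e : Fin n ≃ (Σ i : Fin ℓ, Fin n_i × Fin m_i), and a unitary matrix U ∈ Matrix (Fin n) (Fin n) ℂ, such that for every M ∈ Matrix (Fin n) (Fin n) ℂ: M ∈ S if and only if there exist matrices B i ∈ Matrix (Fin n_i) (Fin n_i) ℂ (i : Fin ℓ) with (Uᴴ * M * U), reindexed along e, equal to blockDiagonal' (fun i => B i ⊗ₖ (1 : Matrix (Fin m_i) (Fin m_i) ℂ)). -/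

import Mathlib

open Matrix Kronecker

/-- The algebra `A` acts on the inner product space `V` compatibly with its star operation. -/
def IsStarAction (A V : Type*) [Star A] [NormedAddCommGroup V] [InnerProductSpace ℂ V] [SMul A V] :
    Prop :=
  ∀ (a : A) (x y : V), inner ℂ (a • x) y = inner ℂ x (star a • y)

namespace IsStarAction

section

variable {A V W : Type*} [Ring A] [Algebra ℂ A] [StarRing A]
  [NormedAddCommGroup V] [InnerProductSpace ℂ V] [FiniteDimensional ℂ V]
  [Module A V] [IsScalarTower ℂ A V]
  [NormedAddCommGroup W] [InnerProductSpace ℂ W] [FiniteDimensional ℂ W]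
  [Module A W] [IsScalarTower ℂ A W]

theorem adjoint_smul (hV : IsStarAction A V) (hW : IsStarAction A W) (f : W →ₗ[A] V)
    (a : A) (v : V) :
    (f.restrictScalars ℂ).adjoint (a • v) = a • (f.restrictScalars ℂ).adjoint v := by
  refine ext_inner_right ℂ fun w => ?_
  rw [LinearMap.adjoint_inner_left, hV, hW, LinearMap.adjoint_inner_left]
  simp

/-- The adjoint of an intertwiner between star actions is again an intertwiner. -/
noncomputable def adjoint (hV : IsStarAction A V) (hW : IsStarAction A W) (f : W →ₗ[A] V) :
    V →ₗ[A] W :=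
  { (f.restrictScalars ℂ).adjoint with
    map_smul' := hV.adjoint_smul hW f }

theorem inner_adjoint_right (hV : IsStarAction A V) (hW : IsStarAction A W) (f : W →ₗ[A] V)
    (w : W) (v : V) : inner ℂ w (hV.adjoint hW f v) = inner ℂ (f w) v :=
  LinearMap.adjoint_inner_right (f.restrictScalars ℂ) w v

theorem isSemisimpleModule (hV : IsStarAction A V) : IsSemisimpleModule A V := by
  refine { exists_isCompl := fun p => ?_ }
  let q : Submodule A V :=
    { (p.restrictScalars ℂ)ᗮ with
      smul_mem' := fun a x hx => by
        intro u hu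
        have := hx (star a • u) (p.smul_mem _ hu)
        rwa [hV, star_star] at this }
  refine ⟨q, ?_⟩
  have h := Submodule.isCompl_orthogonal (K := p.restrictScalars ℂ)
  rw [isCompl_iff, Submodule.disjoint_def, Submodule.codisjoint_iff_exists_add_eq] at h ⊢
  exact h

/-- Schur orthogonality for intertwiners out of non-isomorphic simple modules. -/
theorem inner_map_map_eq_zero (hV : IsStarAction A V) (hW : IsStarAction A W)
    {W' : Type*} [AddCommGroup W'] [Module A W'] [IsSimpleModule A W] [IsSimpleModule A W']
    (h : IsEmpty (W' ≃ₗ[A] W))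
    (f : W →ₗ[A] V) (g : W' →ₗ[A] V) (x : W) (y : W') : inner ℂ (f x) (g y) = 0 := by
  have hT : hV.adjoint hW f ∘ₗ g = 0 := by
    by_contra hne
    exact h.elim (LinearEquiv.ofBijective _ (LinearMap.bijective_of_ne_zero hne))
  rw [← hV.inner_adjoint_right hW, ← LinearMap.comp_apply, hT]
  simp

/-- Schur's lemma: intertwiners out of a simple module are conformal. -/
theorem exists_inner_map_map_eq (hV : IsStarAction A V) (hW : IsStarAction A W)
    [IsSimpleModule A W] (f g : W →ₗ[A] V) :
    ∃ c : ℂ, ∀ x y, inner ℂ (f x) (g y) = c * inner ℂ x y := by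
  obtain ⟨c, hc⟩ := (IsSimpleModule.algebraMap_end_bijective_of_isAlgClosed ℂ).2
    (hV.adjoint hW f ∘ₗ g)
  refine ⟨c, fun x y => ?_⟩
  rw [← hV.inner_adjoint_right hW, ← LinearMap.comp_apply, ← hc, Module.algebraMap_end_apply,
    inner_smul_right]

/-- The intertwiners from a simple module `W` to `V` have a basis of isometries with mutually
orthogonal ranges. -/
theorem exists_isometric_frame (hV : IsStarAction A V) (hW : IsStarAction A W)
    [IsSimpleModule A W] :
    ∃ (m : ℕ) (F : Fin m → W →ₗ[A] V),
      (∀ j k x y, inner ℂ (F j x) (F k y) = if j = k then inner ℂ x y else 0) ∧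
      ∀ f : W →ₗ[A] V, ∃ t : Fin m → ℂ, ∀ x, f x = ∑ j, t j • F j x := by
  have := IsSimpleModule.nontrivial A W
  obtain ⟨u, hu⟩ := exists_norm_eq W (zero_le_one' ℝ)
  have hu0 : u ≠ 0 := by rintro rfl; simp at hu
  have huu : inner ℂ u u = (1 : ℂ) := by simp [inner_self_eq_norm_sq_to_K, hu]
  let ev : (W →ₗ[A] V) →ₗ[ℂ] V :=
    { toFun := fun f => f u
      map_add' := fun _ _ => rfl
      map_smul' := fun _ _ => rfl }
  let b := stdOrthonormalBasis ℂ (LinearMap.range ev)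
  choose F hF using fun j => (b j).2
  refine ⟨_, F, fun j k x y => ?_, fun f => ?_⟩
  · obtain ⟨c, hc⟩ := hV.exists_inner_map_map_eq hW (F j) (F k)
    have h1 := hc u u
    have h2 : inner ℂ (F j u) (F k u) = (inner ℂ (b j) (b k) : ℂ) := by
      rw [Submodule.coe_inner, ← hF j, ← hF k]; rfl
    rw [huu, mul_one, h2, orthonormal_iff_ite.1 b.orthonormal] at h1
    rw [hc, ← h1, ite_mul, one_mul, zero_mul]
  · let v : LinearMap.range ev := ⟨f u, f, rfl⟩
    refine ⟨fun j => inner ℂ (b j) v, fun x => ?_⟩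
    have hs := congrArg Subtype.val (b.sum_repr' v)
    have hx : f u = (∑ j, (inner ℂ (b j) v : ℂ) • F j) u := by
      rw [LinearMap.sum_apply, ← show _ = f u from hs]
      simp only [Submodule.coe_sum, Submodule.coe_smul, ← hF]
      rfl
    have : f = ∑ j, (inner ℂ (b j) v : ℂ) • F j := by
      by_contra hne
      refine hu0 (LinearMap.injective_of_ne_zero (sub_ne_zero.2 hne) ?_)
      rw [LinearMap.sub_apply, hx, sub_self, map_zero]
    conv_lhs => rw [this]
    simp

/-- A star action is, in a suitable orthonormal basis, by block-diagonal matrices whose `i`-th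
block is an arbitrary matrix repeated `mm i` times. -/
theorem exists_orthonormalBasis (hV : IsStarAction A V) :
    ∃ (ℓ : ℕ) (nn mm : Fin ℓ → ℕ), (∀ i, 0 < nn i) ∧ (∀ i, 0 < mm i) ∧
      ∃ b : OrthonormalBasis (Σ i, Fin (nn i) × Fin (mm i)) ℂ V, ∀ M : V →ₗ[ℂ] V,
        (∃ a : A, ∀ v, M v = a • v) ↔
          ∃ B : ∀ i, Matrix (Fin (nn i)) (Fin (nn i)) ℂ,
            ∀ i α j, M (b ⟨i, α, j⟩) = ∑ β, B i β α • b ⟨i, β, j⟩ := by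
  have := hV.isSemisimpleModule
  have : Module.Finite A V := .of_restrictScalars_finite ℂ A V
  have : Module.Finite (Module.End A V) V := .of_restrictScalars_finite ℂ _ V
  obtain ⟨ℓ, ⟨φ⟩⟩ := Finite.exists_equiv_fin (isotypicComponents A V)
  choose p hp hφ using fun i => (φ.symm i).2
  let W (i : Fin ℓ) := (p i).restrictScalars ℂ
  have hs (i : Fin ℓ) : IsSimpleModule A (W i) := hp i
  have hW (i : Fin ℓ) : IsStarAction A (W i) := fun a x y => hV a x y
  have hiso (i i' : Fin ℓ) (h : i ≠ i') : IsEmpty (W i' ≃ₗ[A] W i) := by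
    refine ⟨fun e => h ?_⟩
    have e' : p i' ≃ₗ[A] p i := e
    exact φ.symm.injective (Subtype.ext ((hφ i).trans (e'.isotypicComponent_eq.symm.trans
      (hφ i').symm)))
  choose mm F hF hspan using fun i => hV.exists_isometric_frame (hW i)
  let a (i : Fin ℓ) := stdOrthonormalBasis ℂ (W i)
  let v : (Σ i, Fin (Module.finrank ℂ (W i)) × Fin (mm i)) → V :=
    fun x => F x.1 x.2.2 (a x.1 x.2.1)
  have hv : Orthonormal ℂ v := by
    rw [orthonormal_iff_ite]
    rintro ⟨i, α, j⟩ ⟨i', α', j'⟩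
    by_cases h : i = i'
    · subst h
      simp only [v, hF, orthonormal_iff_ite.1 (a i).orthonormal, Sigma.mk.injEq, heq_eq_eq,
        true_and, Prod.mk.injEq]
      split_ifs <;> tauto
    · simp [v, h, hV.inner_map_map_eq_zero (hW i) (hiso i i' h)]
  have hFv (i j) (x : W i) : F i j x = ∑ α, (inner ℂ (a i α) x : ℂ) • v ⟨i, α, j⟩ := by
    conv_lhs => rw [← (a i).sum_repr' x]
    simp [v]
  have hmem (i) (f : W i →ₗ[A] V) (x : W i) : f x ∈ Submodule.span ℂ (Set.range v) := by
    obtain ⟨t, ht⟩ := hspan i f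
    rw [ht]
    refine Submodule.sum_mem _ fun j _ => Submodule.smul_mem _ _ ?_
    rw [hFv]
    exact Submodule.sum_mem _ fun α _ => Submodule.smul_mem _ _ (Submodule.subset_span ⟨_, rfl⟩)
  have htop : ∀ x : V, x ∈ Submodule.span ℂ (Set.range v) := by
    let P : Submodule A V :=
      { Submodule.span ℂ (Set.range v) with
        smul_mem' := fun s x hx => by
          induction hx using Submodule.span_induction with
          | mem x hx =>
            obtain ⟨⟨i, α, j⟩, rfl⟩ := hx
            simpa [v] using hmem i (F i j) (s • a i α)
          | zero => simp
          | add x y _ _ hx hy => simpa using add_mem hx hy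
          | smul c x _ hx => simpa [smul_comm s c x] using Submodule.smul_mem _ c hx }
    have hP : ⊤ ≤ P := by
      rw [← sSup_isotypicComponents A V]
      refine sSup_le fun c hc => ?_
      obtain ⟨i, hi⟩ := φ.symm.surjective ⟨c, hc⟩
      rw [← show _ = c from congrArg Subtype.val hi, hφ i]
      refine sSup_le fun m ⟨e⟩ x hx => ?_
      have hmx := hmem i (m.subtype ∘ₗ e.symm.toLinearMap) (e ⟨x, hx⟩)
      have hx' : (m.subtype ∘ₗ e.symm.toLinearMap) (e ⟨x, hx⟩) = x := by simp
      exact hx' ▸ hmx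
    exact fun x => hP (Submodule.mem_top (x := x))
  let b := OrthonormalBasis.mk hv fun x _ => htop x
  have hb (x) : b x = v x := by simp [b]
  refine ⟨ℓ, fun i => Module.finrank ℂ (W i), mm, fun i => ?_, fun i => ?_, b, fun M => ?_⟩
  · have := IsSimpleModule.nontrivial A (W i)
    exact Module.finrank_pos
  · have := IsSimpleModule.nontrivial A (W i)
    obtain ⟨u, hu⟩ := exists_ne (0 : W i)
    obtain ⟨t, ht⟩ := hspan i (p i).subtype
    refine Nat.pos_of_ne_zero fun h => hu (Subtype.ext ((ht u).trans ?_))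
    have : IsEmpty (Fin (mm i)) := by rw [h]; infer_instance
    simp
  · simp only [hb]
    constructor
    · rintro ⟨s, hs⟩
      refine ⟨fun i => .of fun β α => inner ℂ (a i β) (s • a i α), fun i α j => ?_⟩
      rw [hs]
      simp only [of_apply, ← hFv, map_smul]
      rfl
    · rintro ⟨B, hB⟩
      let T (i : Fin ℓ) : W i →ₗ[ℂ] W i := Matrix.toLin (a i).toBasis (a i).toBasis (B i)
      have hMF (i j) (x : W i) : M (F i j x) = F i j (T i x) := by
        have : M ∘ₗ (F i j).restrictScalars ℂ = (F i j).restrictScalars ℂ ∘ₗ T i := by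
          refine (a i).toBasis.ext fun α => ?_
          have := hB i α j
          simp only [LinearMap.comp_apply, T, Matrix.toLin_self, map_sum, map_smul]
          simpa [v] using this
        exact LinearMap.congr_fun this x
      have hcomm (c : Module.End A V) (x : V) : M (c x) = c (M x) := by
        have : M ∘ₗ c.restrictScalars ℂ = c.restrictScalars ℂ ∘ₗ M := by
          refine b.toBasis.ext fun ⟨i, α, j⟩ => ?_
          obtain ⟨t, ht⟩ := hspan i (c ∘ₗ F i j)
          simp only [LinearMap.comp_apply] at ht
          simp [hb, v, hMF, ht]
        exact LinearMap.congr_fun this x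
      let M' : Module.End (Module.End A V) V := { M with map_smul' := hcomm }
      obtain ⟨s, hs⟩ := Module.Finite.toModuleEnd_moduleEnd_surjective M'
      exact ⟨s, fun x => (LinearMap.congr_fun hs x).symm⟩

end

end IsStarAction

theorem StarAlgHom.exists_orthonormalBasis {A V : Type*} [Ring A] [Algebra ℂ A] [StarRing A]
    [NormedAddCommGroup V] [InnerProductSpace ℂ V] [FiniteDimensional ℂ V] [CompleteSpace V]
    (π : A →⋆ₐ[ℂ] (V →L[ℂ] V)) :
    ∃ (ℓ : ℕ) (nn mm : Fin ℓ → ℕ), (∀ i, 0 < nn i) ∧ (∀ i, 0 < mm i) ∧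
      ∃ b : OrthonormalBasis (Σ i, Fin (nn i) × Fin (mm i)) ℂ V, ∀ M : V →L[ℂ] V,
        (∃ a, π a = M) ↔ ∃ B : ∀ i, Matrix (Fin (nn i)) (Fin (nn i)) ℂ,
          ∀ i α j, M (b ⟨i, α, j⟩) = ∑ β, B i β α • b ⟨i, β, j⟩ := by
  let _ : Module A V := Module.compHom V (π : A →+* (V →L[ℂ] V))
  have hsmul (a : A) (v : V) : a • v = π a v := rfl
  have : IsScalarTower ℂ A V := ⟨fun c a v => by
    rw [hsmul, hsmul, map_smul, _root_.smul_apply]⟩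
  have hV : IsStarAction A V := fun a x y => by
    rw [hsmul, hsmul, map_star, ContinuousLinearMap.star_eq_adjoint,
      ContinuousLinearMap.adjoint_inner_right]
  obtain ⟨ℓ, nn, mm, hnn, hmm, b, hb⟩ := hV.exists_orthonormalBasis
  refine ⟨ℓ, nn, mm, hnn, hmm, b, fun M => Iff.trans ?_ (hb M.toLinearMap)⟩
  refine exists_congr fun a => ?_
  rw [eq_comm, ContinuousLinearMap.ext_iff]
  rfl

theorem StarSubalgebra.exists_orthonormalBasis {n : Type*} [Fintype n] [DecidableEq n]
    (S : StarSubalgebra ℂ (Matrix n n ℂ)) :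
    ∃ (ℓ : ℕ) (nn mm : Fin ℓ → ℕ), (∀ i, 0 < nn i) ∧ (∀ i, 0 < mm i) ∧
      ∃ b : OrthonormalBasis (Σ i, Fin (nn i) × Fin (mm i)) ℂ (EuclideanSpace ℂ n),
        ∀ M : Matrix n n ℂ, M ∈ S ↔ ∃ B : ∀ i, Matrix (Fin (nn i)) (Fin (nn i)) ℂ,
          ∀ i α j, toEuclideanCLM (𝕜 := ℂ) M (b ⟨i, α, j⟩) = ∑ β, B i β α • b ⟨i, β, j⟩ := by
  let Φ := toEuclideanCLM (𝕜 := ℂ) (n := n)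
  let π : S →⋆ₐ[ℂ] (EuclideanSpace ℂ n →L[ℂ] EuclideanSpace ℂ n) :=
    (Φ : Matrix n n ℂ →⋆ₐ[ℂ] (EuclideanSpace ℂ n →L[ℂ] EuclideanSpace ℂ n)).comp S.subtype
  obtain ⟨ℓ, nn, mm, hnn, hmm, b, hb⟩ := π.exists_orthonormalBasis
  refine ⟨ℓ, nn, mm, hnn, hmm, b, fun M => Iff.trans ?_ (hb (Φ M))⟩
  constructor
  · exact fun h => ⟨⟨M, h⟩, rfl⟩
  · rintro ⟨s, hs⟩
    have : M = s := Φ.injective hs.symm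
    exact this ▸ s.2

theorem OrthonormalBasis.conjTranspose_toMatrix_mul_mul_toMatrix_apply {n : Type*} [Fintype n]
    [DecidableEq n] (b : OrthonormalBasis n ℂ (EuclideanSpace ℂ n)) (M : Matrix n n ℂ) (x y : n) :
    (((EuclideanSpace.basisFun n ℂ).toBasis.toMatrix b)ᴴ * M *
      (EuclideanSpace.basisFun n ℂ).toBasis.toMatrix b) x y =
      inner ℂ (b x) (toEuclideanCLM (𝕜 := ℂ) M (b y)) := by
  rw [Matrix.mul_assoc, EuclideanSpace.inner_eq_star_dotProduct, dotProduct_comm]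
  rfl

theorem OrthonormalBasis.inner_sum_smul_eq_blockDiagonal'_kronecker {ι V : Type*} [DecidableEq ι]
    {m n : ι → Type*} [Fintype ι] [∀ i, Fintype (m i)] [∀ i, Fintype (n i)]
    [∀ i, DecidableEq (m i)] [NormedAddCommGroup V] [InnerProductSpace ℂ V]
    (b : OrthonormalBasis (Σ i, n i × m i) ℂ V) (B : ∀ i, Matrix (n i) (n i) ℂ)
    (x : Σ i, n i × m i) (i : ι) (α : n i) (j : m i) :
    inner ℂ (b x) (∑ β, B i β α • b ⟨i, β, j⟩) =
      blockDiagonal' (fun i => B i ⊗ₖ (1 : Matrix (m i) (m i) ℂ)) x ⟨i, α, j⟩ := by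
  classical
  obtain ⟨i', α', j'⟩ := x
  simp only [inner_sum, inner_smul_right, orthonormal_iff_ite.1 b.orthonormal]
  by_cases h : i' = i
  · subst h
    by_cases hj : j' = j <;> simp [blockDiagonal'_apply, hj]
  · simp [blockDiagonal'_apply, h]

/-- Wedderburn decomposition theorem for matrix *-algebras (Theorem 1). -/
theorem wedderburn_decomposition (n : ℕ) (hn : 1 ≤ n)
    (S : StarSubalgebra ℂ (Matrix (Fin n) (Fin n) ℂ)) :
    ∃ (ℓ : ℕ) (_ : 1 ≤ ℓ) (nn mm : Fin ℓ → ℕ) (_ : ∀ i, 0 < nn i) (_ : ∀ i, 0 < mm i)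
      (_ : ∑ i, nn i * mm i = n)
      (e : Fin n ≃ (Σ i : Fin ℓ, Fin (nn i) × Fin (mm i)))
      (U : Matrix (Fin n) (Fin n) ℂ),
      U ∈ Matrix.unitaryGroup (Fin n) ℂ ∧
      ∀ M : Matrix (Fin n) (Fin n) ℂ,
        M ∈ S ↔ ∃ B : (i : Fin ℓ) → Matrix (Fin (nn i)) (Fin (nn i)) ℂ,
          Matrix.reindex e e (Uᴴ * M * U) =
            Matrix.blockDiagonal' (fun i => B i ⊗ₖ (1 : Matrix (Fin (mm i)) (Fin (mm i)) ℂ)) := by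
  obtain ⟨ℓ, nn, mm, hnn, hmm, b, hb⟩ := S.exists_orthonormalBasis
  have hcard : Fintype.card (Σ i : Fin ℓ, Fin (nn i) × Fin (mm i)) = n := by
    rw [← Module.finrank_eq_card_basis b.toBasis, finrank_euclideanSpace_fin]
  have hsum : ∑ i, nn i * mm i = n := by simpa using hcard
  have hℓ : 1 ≤ ℓ := by
    refine Nat.one_le_iff_ne_zero.2 ?_
    rintro rfl
    simp at hsum
    omega
  let e : Fin n ≃ (Σ i : Fin ℓ, Fin (nn i) × Fin (mm i)) :=
    Fintype.equivOfCardEq (by rw [hcard, Fintype.card_fin])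
  let E := EuclideanSpace.basisFun (Fin n) ℂ
  refine ⟨ℓ, hℓ, nn, mm, hnn, hmm, hsum, e, E.toBasis.toMatrix (b.reindex e.symm),
    E.toMatrix_orthonormalBasis_mem_unitary _, fun M => ?_⟩
  have hU (x y) : Matrix.reindex e e ((E.toBasis.toMatrix (b.reindex e.symm))ᴴ * M *
      E.toBasis.toMatrix (b.reindex e.symm)) x y =
      inner ℂ (b x) (toEuclideanCLM (𝕜 := ℂ) M (b y)) := by
    rw [reindex_apply, submatrix_apply,
      OrthonormalBasis.conjTranspose_toMatrix_mul_mul_toMatrix_apply]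
    simp
  rw [hb]
  refine exists_congr fun B => ?_
  constructor
  · intro h
    ext x ⟨i, α, j⟩
    rw [hU, h, b.inner_sum_smul_eq_blockDiagonal'_kronecker]
  · intro h i α j
    refine b.repr.injective (PiLp.ext fun x => ?_)
    rw [b.repr_apply_apply, b.repr_apply_apply, b.inner_sum_smul_eq_blockDiagonal'_kronecker, ← h, hU]
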